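/- arXiv:1702.07207 — 2 statements merged into one kernel-verified Lean document; each statement's English description precedes it below -/
import Mathlib

section
/- Convergence of the forward–backward splitting algorithm with Nesterov's update (Proposition 1): Let E be a finite-dimensional real inner product space, let β > 0, let f₁ : E → ℝ be convex and differentiable with gradient ∇f₁ Lipschitz continuous with constant β, let f₂ : E → ℝ be convex and continuous, and set f = f₁ + f₂. Let W* ∈ E be a global minimizer of f. Suppose sequences W, Z : ℕ → E and t : ℕ → ℝ satisfy: Z₀ = W₀, t₀ = 1, and for every k ≥ 0, (i) W_{k+1} is a minimizer over E of the function v ↦ (β/2)·‖v − (Z_k − (1/β)·∇f₁(Z_k))‖² + f₂(v) (i.e., W_{k+1} = prox_{(1/β)f₂}(Z_k − (1/β)∇f₁(Z_k))), (ii) t_{k+1} = (1 + √(4·t_k² + 1))/2, and (iii) Z_{k+1} = W_k + μ_k·(W_{k+1} − W_k) with μ_k = 1 + (t_k − 1)/t_{k+1}. Then for every k ≥ 0, f(W_{k+1}) − f(W*) ≤ 4·β·‖W* − W₀‖² / (k+1)². -/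
/-!
The proof is the standard Lyapunov argument for accelerated proximal gradient methods. Write
`f = f₁ + f₂`, `dₖ = f (W (k+1)) - f Wstar ≥ 0` and `uₖ = tₖ W (k+1) - (tₖ - 1) W k - Wstar`.

* One forward–backward step from `z` to `p` satisfies
  `f p + β/2 ‖p - v‖² ≤ f v + β/2 ‖z - v‖²` for every `v` (`forward_backward_step`). This adds up the
  descent lemma and the gradient inequality for `f₁` with the optimality condition of the proximal
  step for `f₂`.
* Taking `v = (1 - 1/t) W (k+1) + (1/t) Wstar` with `t = t (k+1)`, multiplying by `t²` and using
  `t² - t = (t k)²` together with the extrapolation rule for `Z`, one sees that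
  `(t k)² dₖ + β/2 ‖uₖ‖²` is nonincreasing in `k`; at `k = 0` it is at most `β/2 ‖W 0 - Wstar‖²`.
* Since `t k ≥ (k + 2)/2`, this gives the `O(1/k²)` rate.
-/

section

variable {E : Type*} [NormedAddCommGroup E] [InnerProductSpace ℝ E]

theorem hasDerivAt_along_line [CompleteSpace E] {f : E → ℝ} {f' : E → E}
    (hgrad : ∀ x : E, HasGradientAt f (f' x) x) (z d : E) (s : ℝ) :
    HasDerivAt (fun s : ℝ => f (z + s • d)) (inner ℝ (f' (z + s • d)) d) s := by
  have hline : HasDerivAt (fun s : ℝ => z + s • d) d s := by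
    simpa using ((hasDerivAt_id s).smul_const d).const_add z
  have h := (hgrad (z + s • d)).hasFDerivAt.comp_hasDerivAt s hline
  rwa [InnerProductSpace.toDual_apply_apply] at h

/-- Gradient inequality: a differentiable convex function lies above its tangent planes. -/
theorem gradient_inequality [CompleteSpace E] {f : E → ℝ} {f' : E → E}
    (hconv : ConvexOn ℝ Set.univ f) (hgrad : ∀ x : E, HasGradientAt f (f' x) x) (z v : E) :
    f z + inner ℝ (f' z) (v - z) ≤ f v := by
  have hline : ConvexOn ℝ Set.univ (fun s : ℝ => f (z + s • (v - z))) := by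
    have h := hconv.comp_affineMap (AffineMap.lineMap z v : ℝ →ᵃ[ℝ] E)
    have e : f ∘ (AffineMap.lineMap z v : ℝ →ᵃ[ℝ] E) = fun s : ℝ => f (z + s • (v - z)) := by
      funext s
      simp [AffineMap.lineMap_apply, add_comm]
    rwa [e] at h
  have h := hline.le_slope_of_hasDerivAt (Set.mem_univ 0) (Set.mem_univ 1) one_pos
    (hasDerivAt_along_line hgrad z (v - z) 0)
  simp [slope_def_field] at h
  linarith

/-- Descent lemma: a function with `β`-Lipschitz gradient lies below its quadratic models of
curvature `β`. -/
theorem descent_lemma [CompleteSpace E] {β : ℝ} {f : E → ℝ} {f' : E → E}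
    (hgrad : ∀ x : E, HasGradientAt f (f' x) x)
    (hlip : ∀ u v : E, ‖f' u - f' v‖ ≤ β * ‖u - v‖) (z u : E) :
    f u ≤ f z + inner ℝ (f' z) (u - z) + β / 2 * ‖u - z‖ ^ 2 := by
  set d := u - z with hd
  -- The gap between `f` and its quadratic model is nonincreasing along the segment from `z` to `u`.
  have hder (s : ℝ) : HasDerivAt
      (fun s : ℝ => f (z + s • d) - s * inner ℝ (f' z) d - s ^ 2 * (β / 2 * ‖d‖ ^ 2))
      (inner ℝ (f' (z + s • d)) d - inner ℝ (f' z) d - s * (β * ‖d‖ ^ 2)) s := by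
    have h := ((hasDerivAt_along_line hgrad z d s).sub
      ((hasDerivAt_id s).mul_const (inner ℝ (f' z) d))).sub
      (((hasDerivAt_id s).pow 2).mul_const (β / 2 * ‖d‖ ^ 2))
    refine h.congr_deriv ?_
    simp
    ring
  have hanti := antitoneOn_of_deriv_nonpos (convex_Icc (0 : ℝ) 1)
    (fun s _ => (hder s).continuousAt.continuousWithinAt)
    (fun s _ => (hder s).differentiableAt.differentiableWithinAt)
    (fun s hs => by
      rw [interior_Icc] at hs
      rw [(hder s).deriv, ← inner_sub_left]
      have h1 := real_inner_le_norm (f' (z + s • d) - f' z) d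
      have h2 := hlip (z + s • d) z
      rw [add_sub_cancel_left, norm_smul, Real.norm_of_nonneg hs.1.le] at h2
      nlinarith [mul_le_mul_of_nonneg_right h2 (norm_nonneg d)])
  have h := hanti (Set.left_mem_Icc.2 zero_le_one) (Set.right_mem_Icc.2 zero_le_one) zero_le_one
  simp [hd] at h
  simp only [hd]
  linarith

/-- First-order optimality of a proximal point `p` of `y`: the vector `β (y - p)` is a subgradient
of `g` at `p`. -/
theorem prox_optimality {β : ℝ} {g : E → ℝ} (hconv : ConvexOn ℝ Set.univ g) {y p : E}
    (hp : ∀ v : E, β / 2 * ‖p - y‖ ^ 2 + g p ≤ β / 2 * ‖v - y‖ ^ 2 + g v) (v : E) :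
    g p ≤ g v + β * inner ℝ (p - y) (v - p) := by
  -- Compare `p` with `p + s (v - p)`, divide by `s`, and let `s` tend to `0` from the right.
  have hs : ∀ s ∈ Set.Ioo (0 : ℝ) 1,
      g p ≤ g v + β * inner ℝ (p - y) (v - p) + s * (β / 2 * ‖v - p‖ ^ 2) := by
    rintro s ⟨hs0, hs1⟩
    have h1 := hp (p + s • (v - p))
    have h2 := hconv.2 (Set.mem_univ p) (Set.mem_univ v) (sub_nonneg.2 hs1.le) hs0.le
      (sub_add_cancel 1 s)
    have e1 : (1 - s) • p + s • v = p + s • (v - p) := by module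
    have e2 : p + s • (v - p) - y = (p - y) + s • (v - p) := by module
    rw [e1] at h2
    rw [e2, norm_add_sq_real, inner_smul_right, norm_smul, Real.norm_of_nonneg hs0.le] at h1
    simp only [smul_eq_mul] at h2
    refine le_of_mul_le_mul_left ?_ hs0
    linear_combination h1 + h2
  have hlim : Filter.Tendsto
      (fun s : ℝ => g v + β * inner ℝ (p - y) (v - p) + s * (β / 2 * ‖v - p‖ ^ 2))
      (nhdsWithin 0 (Set.Ioi 0)) (nhds (g v + β * inner ℝ (p - y) (v - p))) := by
    have hc : Continuous
        (fun s : ℝ => g v + β * inner ℝ (p - y) (v - p) + s * (β / 2 * ‖v - p‖ ^ 2)) := by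
      fun_prop
    simpa using (hc.tendsto 0).mono_left nhdsWithin_le_nhds
  refine ge_of_tendsto hlim ?_
  filter_upwards [Ioo_mem_nhdsGT (zero_lt_one' ℝ)] with s h using hs s h

theorem forward_backward_step [CompleteSpace E] {β : ℝ} (hβ : 0 < β)
    {f₁ f₂ : E → ℝ} {f₁' : E → E}
    (hf₁conv : ConvexOn ℝ Set.univ f₁)
    (hf₁grad : ∀ x : E, HasGradientAt f₁ (f₁' x) x)
    (hf₁lip : ∀ u v : E, ‖f₁' u - f₁' v‖ ≤ β * ‖u - v‖)
    (hf₂conv : ConvexOn ℝ Set.univ f₂) {z p : E}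
    (hp : ∀ v : E, β / 2 * ‖p - (z - β⁻¹ • f₁' z)‖ ^ 2 + f₂ p ≤
      β / 2 * ‖v - (z - β⁻¹ • f₁' z)‖ ^ 2 + f₂ v) (v : E) :
    f₁ p + f₂ p + β / 2 * ‖p - v‖ ^ 2 ≤ f₁ v + f₂ v + β / 2 * ‖z - v‖ ^ 2 := by
  have h1 := descent_lemma hf₁grad hf₁lip z p
  have h2 := gradient_inequality hf₁conv hf₁grad z v
  have h3 := prox_optimality hf₂conv hp v
  have e1 : p - (z - β⁻¹ • f₁' z) = (p - z) + β⁻¹ • f₁' z := by module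
  have e2 : β * inner ℝ (p - (z - β⁻¹ • f₁' z)) (v - p) =
      β * inner ℝ (p - z) (v - p) + inner ℝ (f₁' z) (v - p) := by
    rw [e1, inner_add_left, real_inner_smul_left]
    field_simp
  have e3 : inner ℝ (f₁' z) (v - z) =
      inner ℝ (f₁' z) (v - p) + inner ℝ (f₁' z) (p - z) := by
    rw [← inner_add_right, sub_add_sub_cancel]
  have e4 : ‖z - v‖ ^ 2 = ‖p - z‖ ^ 2 + 2 * inner ℝ (p - z) (v - p) + ‖p - v‖ ^ 2 := by
    rw [norm_sub_rev z v, norm_sub_rev p v, ← norm_add_sq_real]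
    congr 2
    abel
  rw [e2] at h3
  rw [e3] at h2
  rw [e4]
  linarith

end


/-- **Convergence of forward–backward splitting with Nesterov's update.**
Let `E` be a finite-dimensional real inner product space, `f₁ : E → ℝ` convex and
differentiable with `β`-Lipschitz gradient `f₁'`, `f₂ : E → ℝ` convex and continuous,
and `Wstar` a global minimizer of `f = f₁ + f₂`.  If the sequences `W, Z, t` follow the
forward–backward splitting iteration with Nesterov's step-size update, then
`f (W (k+1)) - f Wstar ≤ 4 β ‖Wstar - W 0‖² / (k+1)²` for every `k`. -/
theorem fbs_nesterov_convergence
    {E : Type*} [NormedAddCommGroup E] [InnerProductSpace ℝ E] [FiniteDimensional ℝ E]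
    (β : ℝ) (hβ : 0 < β)
    (f₁ f₂ : E → ℝ) (f₁' : E → E)
    (hf₁conv : ConvexOn ℝ Set.univ f₁)
    (hf₁grad : ∀ x : E, HasGradientAt f₁ (f₁' x) x)
    (hf₁lip : ∀ u v : E, ‖f₁' u - f₁' v‖ ≤ β * ‖u - v‖)
    (hf₂conv : ConvexOn ℝ Set.univ f₂)
    (hf₂cont : Continuous f₂)
    (Wstar : E)
    (hWstar : ∀ v : E, f₁ Wstar + f₂ Wstar ≤ f₁ v + f₂ v)
    (W Z : ℕ → E) (t : ℕ → ℝ)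
    (hZ0 : Z 0 = W 0) (ht0 : t 0 = 1)
    (hprox : ∀ k : ℕ, ∀ v : E,
      β / 2 * ‖W (k + 1) - (Z k - β⁻¹ • f₁' (Z k))‖ ^ 2 + f₂ (W (k + 1)) ≤
        β / 2 * ‖v - (Z k - β⁻¹ • f₁' (Z k))‖ ^ 2 + f₂ v)
    (ht : ∀ k : ℕ, t (k + 1) = (1 + Real.sqrt (4 * t k ^ 2 + 1)) / 2)
    (hZ : ∀ k : ℕ, Z (k + 1) = W k + (1 + (t k - 1) / t (k + 1)) • (W (k + 1) - W k)) :
    ∀ k : ℕ,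
      (f₁ (W (k + 1)) + f₂ (W (k + 1))) - (f₁ Wstar + f₂ Wstar) ≤
        4 * β * ‖Wstar - W 0‖ ^ 2 / ((k : ℝ) + 1) ^ 2 := by
  have hfconv : ConvexOn ℝ Set.univ (fun x => f₁ x + f₂ x) := hf₁conv.add hf₂conv
  have hstep (k : ℕ) (v : E) := forward_backward_step hβ hf₁conv hf₁grad hf₁lip hf₂conv (hprox k) v
  have ht_rec (k : ℕ) : t (k + 1) ^ 2 - t (k + 1) = t k ^ 2 := by
    rw [ht k]
    have := Real.sq_sqrt (show (0 : ℝ) ≤ 4 * t k ^ 2 + 1 by positivity)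
    linarith
  have ht_lower (k : ℕ) : ((k : ℝ) + 2) / 2 ≤ t k := by
    induction k with
    | zero => simp [ht0]
    | succ k ih =>
      have hk : (0 : ℝ) ≤ k := k.cast_nonneg
      have h : 2 * t k ≤ Real.sqrt (4 * t k ^ 2 + 1) := Real.le_sqrt_of_sq_le (by linarith)
      rw [ht k]
      push_cast
      linarith
  have ht_pos (k : ℕ) : 0 < t k := lt_of_lt_of_le (by positivity) (ht_lower k)
  have hlyap (k : ℕ) :
      t k ^ 2 * ((f₁ (W (k + 1)) + f₂ (W (k + 1))) - (f₁ Wstar + f₂ Wstar)) +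
        β / 2 * ‖t k • W (k + 1) - (t k - 1) • W k - Wstar‖ ^ 2 ≤
      β / 2 * ‖Wstar - W 0‖ ^ 2 := by
    induction k with
    | zero =>
      have h := hstep 0 Wstar
      rw [hZ0, norm_sub_rev (W 0) Wstar] at h
      simp only [ht0, zero_add, sub_self, one_smul, zero_smul, sub_zero, one_pow, one_mul] at h ⊢
      linarith
    | succ k ih =>
      refine le_trans ?_ ih
      have hpos := ht_pos (k + 1)
      have hne := hpos.ne'
      have hone : 1 ≤ t (k + 1) := by
        have h := ht_lower (k + 1)
        have hk : (0 : ℝ) ≤ k := k.cast_nonneg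
        push_cast at h
        linarith
      have hZk := hZ k
      have hrec := ht_rec k
      set T := t (k + 1)
      set v : E := (1 - T⁻¹) • W (k + 1) + T⁻¹ • Wstar with hv
      have h1 := hstep (k + 1) v
      have h2 := hfconv.2 (Set.mem_univ (W (k + 1))) (Set.mem_univ Wstar)
        (sub_nonneg.2 (inv_le_one_of_one_le₀ hone)) (inv_nonneg.2 hpos.le) (sub_add_cancel 1 T⁻¹)
      simp only [smul_eq_mul, ← hv] at h2
      have e1 : T • W (k + 1 + 1) - (T - 1) • W (k + 1) - Wstar = T • (W (k + 1 + 1) - v) := by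
        rw [hv]
        match_scalars <;> field_simp
      have e2 : t k • W (k + 1) - (t k - 1) • W k - Wstar = T • (Z (k + 1) - v) := by
        rw [hv, hZk]
        match_scalars <;> field_simp <;> ring
      rw [e1, e2, norm_smul, norm_smul, mul_pow, mul_pow, Real.norm_of_nonneg hpos.le, ← hrec]
      have h3 := mul_le_mul_of_nonneg_left (add_le_add h1 h2) (sq_nonneg T)
      have e3 : T ^ 2 * T⁻¹ = T := by field_simp
      linear_combination h3 + (f₁ Wstar + f₂ Wstar - f₁ (W (k + 1)) - f₂ (W (k + 1))) * e3
  intro k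
  have hk : (0 : ℝ) ≤ k := k.cast_nonneg
  have hgap := sub_nonneg.2 (hWstar (W (k + 1)))
  rw [le_div_iff₀ (by positivity)]
  have h1 : ((k : ℝ) + 1) ^ 2 ≤ 4 * t k ^ 2 := by nlinarith [ht_lower k]
  have h2 := mul_le_mul_of_nonneg_left h1 hgap
  have h3 : 0 ≤ β / 2 * ‖t k • W (k + 1) - (t k - 1) • W k - Wstar‖ ^ 2 := by positivity
  have h4 : 0 ≤ β * ‖Wstar - W 0‖ ^ 2 := by positivity
  linarith [hlyap k]
end

section
/- Closed-form solution of the ADMM (P,Q)-update subproblem: Let k, n be positive integers, 𝕊 ∈ ℂ^{k×n}, x ∈ ℂ^k, p_t, q_t ∈ ℂ^n, and υ > 0. Set 𝒮 = 𝕊^H·𝕊 and x̌ = 𝕊^H·x. Then the matrix 2·𝒮 + υ·I_n is invertible, and, defining u = (2·𝒮 + υ·I_n)^{-1}·(2·x̌ + υ·(p_t + q_t)), p* = p_t + (1/υ)·(x̌ − 𝒮·u), and q* = q_t + (1/υ)·(x̌ − 𝒮·u), the pair (p*, q*) is a global minimizer of the function g(p, q) = (1/2)·‖x − 𝕊·(p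 + q)‖² + (υ/2)·‖p − p_t‖² + (υ/2)·‖q − q_t‖² over ℂ^n × ℂ^n, i.e., g(p*, q*) ≤ g(p, q) for all p, q ∈ ℂ^n. -/
open scoped Matrix

/-!
The function `g` is a convex quadratic, so it is minimized exactly where its gradient vanishes, and
convexity is made explicit by expanding `g` around the candidate point. Put `d = υ⁻¹(x̌ − 𝒮u)`.
The defining equation `(2𝒮 + υI)u = 2x̌ + υ(p_t + q_t)` says `u = p_t + q_t + 2d = p* + q*`, so the
residual at the candidate is `r = x − 𝕊u`, and `𝕊ᴴr = x̌ − 𝒮u = υd`. For a perturbation `(a, b)` the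
first-order part of `g(p* + a, q* + b)` is `−Re⟨r, 𝕊(a + b)⟩ + υ Re⟨d, a⟩ + υ Re⟨d, b⟩`, which
vanishes because `⟨r, 𝕊c⟩ = ⟨𝕊ᴴr, c⟩ = υ⟨d, c⟩`; the second-order part is a sum of squares.
Invertibility of `2𝒮 + υI` follows from positive definiteness.
-/

/-- Expansion of the squared Euclidean norm of a sum. -/
lemma sum_norm_add_sq {m : ℕ} (v w : Fin m → ℂ) :
    ∑ i, ‖v i + w i‖ ^ 2 = ∑ i, ‖v i‖ ^ 2 + ∑ i, ‖w i‖ ^ 2 + 2 * (star v ⬝ᵥ w).re := by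
  simp only [dotProduct, Complex.re_sum, Finset.mul_sum, ← Finset.sum_add_distrib]
  refine Finset.sum_congr rfl fun i _ => ?_
  simp only [← Complex.normSq_eq_norm_sq, Complex.normSq_apply, Pi.star_apply, Complex.add_re,
    Complex.add_im, Complex.mul_re, Complex.star_def, Complex.conj_re, Complex.conj_im]
  ring

open scoped ComplexOrder in
lemma isUnit_two_smul_gram_add {k n : ℕ} (S : Matrix (Fin k) (Fin n) ℂ) {υ : ℝ} (hυ : 0 < υ) :
    IsUnit ((2 : ℂ) • (Sᴴ * S) + (υ : ℂ) • (1 : Matrix (Fin n) (Fin n) ℂ)) := by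
  have h1 : ((2 : ℂ) • (Sᴴ * S)).PosSemidef :=
    (Matrix.posSemidef_conjTranspose_mul_self S).smul (by norm_num)
  have h2 : ((υ : ℂ) • (1 : Matrix (Fin n) (Fin n) ℂ)).PosDef :=
    Matrix.PosDef.one.smul (by exact_mod_cast hυ)
  exact (Matrix.PosDef.posSemidef_add h1 h2).isUnit

/-- The objective is minimized at `(pt + d, qt + d)` as soon as the stationarity condition
`Sᴴ (x - S (p + q)) = υ d` holds there. -/
lemma objective_le_of_stationary {k n : ℕ} (S : Matrix (Fin k) (Fin n) ℂ) (x : Fin k → ℂ)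
    (pt qt d : Fin n → ℂ) {υ : ℝ} (hυ : 0 < υ)
    (hd : Sᴴ *ᵥ (x - S *ᵥ ((pt + d) + (qt + d))) = (υ : ℂ) • d) (p q : Fin n → ℂ) :
    1 / 2 * ∑ i, ‖x i - (S *ᵥ ((pt + d) + (qt + d))) i‖ ^ 2 +
        υ / 2 * ∑ i, ‖(pt + d) i - pt i‖ ^ 2 + υ / 2 * ∑ i, ‖(qt + d) i - qt i‖ ^ 2 ≤
      1 / 2 * ∑ i, ‖x i - (S *ᵥ (p + q)) i‖ ^ 2 +
        υ / 2 * ∑ i, ‖p i - pt i‖ ^ 2 + υ / 2 * ∑ i, ‖q i - qt i‖ ^ 2 := by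
  obtain ⟨a, rfl⟩ : ∃ a, p = pt + d + a := ⟨p - (pt + d), by abel⟩
  obtain ⟨b, rfl⟩ : ∃ b, q = qt + d + b := ⟨q - (qt + d), by abel⟩
  set r : Fin k → ℂ := x - S *ᵥ ((pt + d) + (qt + d)) with hr
  have e1 : ∀ i, x i - (S *ᵥ ((pt + d + a) + (qt + d + b))) i = r i + (-(S *ᵥ (a + b))) i := by
    intro i
    have : (pt + d + a) + (qt + d + b) = ((pt + d) + (qt + d)) + (a + b) := by abel
    rw [this, Matrix.mulVec_add]
    simp only [hr, Pi.add_apply, Pi.sub_apply, Pi.neg_apply]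
    ring
  have e2 : ∀ i, x i - (S *ᵥ ((pt + d) + (qt + d))) i = r i := fun i => rfl
  have e3 : ∀ (t c : Fin n → ℂ) (i), (t + d + c) i - t i = d i + c i := by
    intro t c i
    simp only [Pi.add_apply]
    ring
  have e4 : ∀ (t : Fin n → ℂ) (i), (t + d) i - t i = d i := by
    intro t i
    simp only [Pi.add_apply]
    ring
  have adj : (star r ⬝ᵥ (-(S *ᵥ (a + b)))).re =
      -(υ * (star d ⬝ᵥ a).re) - υ * (star d ⬝ᵥ b).re := by
    have : star r ⬝ᵥ (S *ᵥ (a + b)) = (υ : ℂ) * (star d ⬝ᵥ a + star d ⬝ᵥ b) := by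
      rw [Matrix.dotProduct_mulVec, ← Matrix.conjTranspose_conjTranspose S,
        ← Matrix.star_mulVec, hd, star_smul, smul_dotProduct, dotProduct_add]
      simp
    rw [dotProduct_neg, this]
    simp only [Complex.neg_re, Complex.re_ofReal_mul, Complex.add_re]
    ring
  simp only [e1, e2, e3, e4, sum_norm_add_sq, adj]
  have p1 : 0 ≤ ∑ i, ‖(-(S *ᵥ (a + b))) i‖ ^ 2 := by positivity
  have p2 : 0 ≤ υ * ∑ i, ‖a i‖ ^ 2 := by positivity
  have p3 : 0 ≤ υ * ∑ i, ‖b i‖ ^ 2 := by positivity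
  linarith

/-- **Closed-form solution of the ADMM (P,Q)-update subproblem.**
With `𝒮 = 𝕊ᴴ𝕊`, `x̌ = 𝕊ᴴx`, the matrix `2𝒮 + υI` is invertible, and setting
`u = (2𝒮 + υI)⁻¹(2x̌ + υ(p_t + q_t))`, `p* = p_t + (1/υ)(x̌ − 𝒮u)`,
`q* = q_t + (1/υ)(x̌ − 𝒮u)`, the pair `(p*, q*)` globally minimizes
`g(p,q) = (1/2)‖x − 𝕊(p+q)‖² + (υ/2)‖p − p_t‖² + (υ/2)‖q − q_t‖²`. -/
theorem admm_pq_update_closed_form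
    (k n : ℕ) (hk : 0 < k) (hn : 0 < n)
    (S : Matrix (Fin k) (Fin n) ℂ) (x : Fin k → ℂ)
    (pt qt : Fin n → ℂ) (υ : ℝ) (hυ : 0 < υ) :
    let 𝒮 : Matrix (Fin n) (Fin n) ℂ := Sᴴ * S
    let xc : Fin n → ℂ := Sᴴ *ᵥ x
    let M : Matrix (Fin n) (Fin n) ℂ := (2 : ℂ) • 𝒮 + (υ : ℂ) • 1
    let u : Fin n → ℂ := M⁻¹ *ᵥ ((2 : ℂ) • xc + (υ : ℂ) • (pt + qt))
    let pstar : Fin n → ℂ := pt + (υ : ℂ)⁻¹ • (xc - 𝒮 *ᵥ u)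
    let qstar : Fin n → ℂ := qt + (υ : ℂ)⁻¹ • (xc - 𝒮 *ᵥ u)
    let g : (Fin n → ℂ) → (Fin n → ℂ) → ℝ := fun p q =>
      1 / 2 * ∑ i, ‖x i - (S *ᵥ (p + q)) i‖ ^ 2 +
        υ / 2 * ∑ i, ‖p i - pt i‖ ^ 2 + υ / 2 * ∑ i, ‖q i - qt i‖ ^ 2
    IsUnit M ∧ ∀ p q : Fin n → ℂ, g pstar qstar ≤ g p q := by
  intro 𝒮 xc M u pstar qstar g
  have hM : IsUnit M := isUnit_two_smul_gram_add S hυ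
  refine ⟨hM, fun p q => ?_⟩
  have hυ' : (υ : ℂ) ≠ 0 := by exact_mod_cast hυ.ne'
  have hMu : (2 : ℂ) • (𝒮 *ᵥ u) + (υ : ℂ) • u = (2 : ℂ) • xc + (υ : ℂ) • (pt + qt) := by
    have h : M *ᵥ u = (2 : ℂ) • xc + (υ : ℂ) • (pt + qt) := by
      simp only [u]
      rw [Matrix.mulVec_mulVec, Matrix.mul_nonsing_inv _ ((Matrix.isUnit_iff_isUnit_det M).mp hM),
        Matrix.one_mulVec]
    rw [← h]
    simp only [M, Matrix.add_mulVec, Matrix.smul_mulVec, Matrix.one_mulVec]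
  have hu : pstar + qstar = u := by
    ext i
    have h := congrFun hMu i
    simp only [pstar, qstar, Pi.add_apply, Pi.smul_apply, Pi.sub_apply, smul_eq_mul] at h ⊢
    field_simp
    linear_combination -h
  refine objective_le_of_stationary S x pt qt ((υ : ℂ)⁻¹ • (xc - 𝒮 *ᵥ u)) hυ ?_ p q
  change Sᴴ *ᵥ (x - S *ᵥ (pstar + qstar)) = _
  rw [hu, smul_inv_smul₀ hυ', Matrix.mulVec_sub, Matrix.mulVec_mulVec]
end
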